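/- arXiv:1404.2873 — 2 statements merged into one kernel-verified Lean document; each statement's English description precedes it below -/
import Mathlib

section
/- Let G be a finite abelian group and G₀ ⊆ G a non-half-factorial subset, i.e. Δ(G₀) ≠ ∅. Then min Δ(G₀) ≤ max { exp(G) − 2, r(G) − 1 }. -/
open Multiset

section Defs

variable {G : Type*} [AddCommGroup G]

/-- `S` is a zero-sum sequence over `G₀`: a multiset with entries in `G₀` and sum `0`. -/
def IsZeroSumSeq (G₀ : Set G) (S : Multiset G) : Prop :=
  (∀ x ∈ S, x ∈ G₀) ∧ S.sum = 0

/-- `S` is an atom over `G₀`: a nonempty zero-sum sequence over `G₀` that is not the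
union of two nonempty zero-sum sequences over `G₀`. -/
def IsAtomSeq (G₀ : Set G) (S : Multiset G) : Prop :=
  IsZeroSumSeq G₀ S ∧ S ≠ 0 ∧
    ∀ A B : Multiset G, IsZeroSumSeq G₀ A → IsZeroSumSeq G₀ B →
      A ≠ 0 → B ≠ 0 → S ≠ A + B

/-- The set of lengths of `B`: all `k` such that `B` is a union of `k` atoms over `G₀`. -/
def LengthSet (G₀ : Set G) (B : Multiset G) : Set ℕ :=
  {k | ∃ l : Multiset (Multiset G), Multiset.card l = k ∧
      (∀ A ∈ l, IsAtomSeq G₀ A) ∧ l.sum = B}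

/-- The set of successive distances of a set of naturals. -/
def DeltaOf (L : Set ℕ) : Set ℕ :=
  {d | ∃ x ∈ L, ∃ y ∈ L, x < y ∧ y - x = d ∧ ∀ z ∈ L, ¬(x < z ∧ z < y)}

/-- The set of distances `Δ(G₀)`. -/
def DeltaSet (G₀ : Set G) : Set ℕ :=
  {d | ∃ B : Multiset G, IsZeroSumSeq G₀ B ∧ B ≠ 0 ∧ d ∈ DeltaOf (LengthSet G₀ B)}

/-- `G₀` is half-factorial if `Δ(G₀) = ∅`. -/
def IsHalfFactorialSet (G₀ : Set G) : Prop := DeltaSet G₀ = ∅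

/-- `G₀` is minimal non-half-factorial if `Δ(G₀) ≠ ∅` and every proper subset is
half-factorial. -/
def IsMinNonHalfFactorial (G₀ : Set G) : Prop :=
  (DeltaSet G₀).Nonempty ∧ ∀ G₁ : Set G, G₁ ⊂ G₀ → DeltaSet G₁ = ∅

/-- The cross number `k(S) = Σ 1/ord(g)` of a multiset over `G`. -/
noncomputable def crossNumber (S : Multiset G) : ℚ :=
  (S.map (fun g => ((addOrderOf g : ℚ))⁻¹)).sum

/-- `G₀` is an LCN-set if every atom over `G₀` has cross number at least 1. -/
def IsLCNSet (G₀ : Set G) : Prop :=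
  ∀ U : Multiset G, IsAtomSeq G₀ U → 1 ≤ crossNumber U

/-- A subset of `G \ {0}` is independent if any integral linear relation on its elements
has all summands zero. -/
def IsIndependentSet (E : Set G) : Prop :=
  (0 : G) ∉ E ∧ ∀ s : Finset G, ↑s ⊆ E → ∀ f : G → ℤ,
    (∑ e ∈ s, f e • e) = 0 → ∀ e ∈ s, f e • e = 0

/-- `d` is a greatest common divisor of the set `S` of naturals. -/
def IsSetGcd (S : Set ℕ) (d : ℕ) : Prop :=
  (∀ s ∈ S, d ∣ s) ∧ ∀ e : ℕ, (∀ s ∈ S, e ∣ s) → e ∣ d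

end Defs

/-- The set of minimal distances `Δ*(G)`. -/
def DeltaStar (G : Type*) [AddCommGroup G] : Set ℕ :=
  {d | ∃ G₀ : Set G, (DeltaSet G₀).Nonempty ∧ d = sInf (DeltaSet G₀)}

/-- The `p`-rank of a finite abelian group: `log_p` of the order of the `p`-torsion
subgroup `{x | p • x = 0}`. -/
noncomputable def pRank (G : Type*) [AddCommGroup G] (p : ℕ) : ℕ :=
  Nat.log p (Nat.card {x : G // p • x = 0})

/-- The rank of a finite abelian group: the maximum of the `p`-ranks over all primes. -/
noncomputable def rankG (G : Type*) [AddCommGroup G] : ℕ :=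
  sSup {r : ℕ | ∃ p : ℕ, p.Prime ∧ r = pRank G p}

section Aux

variable {G : Type*} [AddCommGroup G]

lemma zs_add {G₀ : Set G} {A B : Multiset G} (hA : IsZeroSumSeq G₀ A) (hB : IsZeroSumSeq G₀ B) :
    IsZeroSumSeq G₀ (A + B) := by
  refine ⟨fun x hx => ?_, ?_⟩
  · rcases Multiset.mem_add.1 hx with h | h
    · exact hA.1 x h
    · exact hB.1 x h
  · rw [Multiset.sum_add, hA.2, hB.2, add_zero]

lemma zs_of_add {G₀ : Set G} {A B : Multiset G} (hA : IsZeroSumSeq G₀ A)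
    (hAB : IsZeroSumSeq G₀ (A + B)) : IsZeroSumSeq G₀ B := by
  refine ⟨fun x hx => hAB.1 x (Multiset.mem_add.2 (Or.inr hx)), ?_⟩
  have := hAB.2
  rwa [Multiset.sum_add, hA.2, zero_add] at this

lemma zs_sum {G₀ : Set G} (l : Multiset (Multiset G)) (h : ∀ A ∈ l, IsZeroSumSeq G₀ A) :
    IsZeroSumSeq G₀ l.sum := by
  induction l using Multiset.induction_on with
  | empty => exact ⟨by simp, by simp⟩
  | cons A l ih =>
    rw [Multiset.sum_cons]
    exact zs_add (h A (by simp)) (ih fun B hB => h B (by simp [hB]))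

/-- every zero-sum sequence factors into atoms -/
lemma exists_fact {G₀ : Set G} : ∀ (n : ℕ) (B : Multiset G), Multiset.card B ≤ n →
    IsZeroSumSeq G₀ B →
    ∃ l : Multiset (Multiset G), (∀ A ∈ l, IsAtomSeq G₀ A) ∧ l.sum = B := by
  intro n
  induction n with
  | zero =>
    intro B hc hB
    have : B = 0 := by simpa using hc
    exact ⟨0, by simp, by simp [this]⟩
  | succ n ih =>
    intro B hc hB
    by_cases h0 : B = 0
    · exact ⟨0, by simp, by simp [h0]⟩
    by_cases hat : IsAtomSeq G₀ B
    · exact ⟨{B}, by simpa using hat, by simp⟩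
    · have : ∃ A C : Multiset G, IsZeroSumSeq G₀ A ∧ IsZeroSumSeq G₀ C ∧ A ≠ 0 ∧ C ≠ 0 ∧
          B = A + C := by
        by_contra hcon
        push Not at hcon
        exact hat ⟨hB, h0, fun A C hA hC hA0 hC0 => hcon A C hA hC hA0 hC0⟩
      obtain ⟨A, C, hA, hC, hA0, hC0, rfl⟩ := this
      have h1 := Multiset.card_pos.2 hA0
      have h2 := Multiset.card_pos.2 hC0
      rw [Multiset.card_add] at hc
      obtain ⟨l1, hl1, hs1⟩ := ih A (by omega) hA
      obtain ⟨l2, hl2, hs2⟩ := ih C (by omega) hC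
      refine ⟨l1 + l2, fun D hD => ?_, by rw [Multiset.sum_add, hs1, hs2]⟩
      rcases Multiset.mem_add.1 hD with h | h
      · exact hl1 D h
      · exact hl2 D h

lemma fact {G₀ : Set G} (B : Multiset G) (hB : IsZeroSumSeq G₀ B) :
    ∃ l : Multiset (Multiset G), (∀ A ∈ l, IsAtomSeq G₀ A) ∧ l.sum = B :=
  exists_fact _ B le_rfl hB

lemma cn_add (A B : Multiset G) : crossNumber (A + B) = crossNumber A + crossNumber B := by
  simp [crossNumber]

lemma cn_zero : crossNumber (0 : Multiset G) = 0 := by simp [crossNumber]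

lemma cn_sum_eq (l : Multiset (Multiset G)) (h : ∀ A ∈ l, crossNumber A = 1) :
    crossNumber l.sum = Multiset.card l := by
  induction l using Multiset.induction_on with
  | empty => simp [cn_zero]
  | cons A l ih =>
    rw [Multiset.sum_cons, cn_add, h A (by simp), ih fun B hB => h B (by simp [hB])]
    push_cast [Multiset.card_cons]
    ring

lemma cn_sum_ge (l : Multiset (Multiset G)) (h : ∀ A ∈ l, 1 ≤ crossNumber A) :
    (Multiset.card l : ℚ) ≤ crossNumber l.sum := by
  induction l using Multiset.induction_on with
  | empty => simp [cn_zero]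
  | cons A l ih =>
    rw [Multiset.sum_cons, cn_add]
    have h1 := h A (by simp)
    have h2 := ih fun B hB => h B (by simp [hB])
    push_cast [Multiset.card_cons]
    linarith

lemma cn_sum_eq' (l : Multiset (Multiset G)) (h : ∀ A ∈ l, 1 ≤ crossNumber A)
    (he : crossNumber l.sum ≤ Multiset.card l) : ∀ A ∈ l, crossNumber A = 1 := by
  intro A hA
  obtain ⟨t, rfl⟩ := Multiset.exists_cons_of_mem hA
  rw [Multiset.sum_cons, cn_add] at he
  have h1 := h A (by simp)
  have h2 := cn_sum_ge t fun B hB => h B (by simp [hB])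
  push_cast [Multiset.card_cons] at he
  linarith

/-- an atom which is a sum of atoms -/
lemma atom_fact {G₀ : Set G} {U : Multiset G} (hU : IsAtomSeq G₀ U) (l : Multiset (Multiset G))
    (hl : ∀ A ∈ l, IsAtomSeq G₀ A) (hs : l.sum = U) : U ∈ l := by
  induction l using Multiset.induction_on with
  | empty => exact absurd hs.symm (by simpa using hU.2.1)
  | cons A l ih =>
    rw [Multiset.sum_cons] at hs
    by_cases h : l.sum = 0
    · rw [h, add_zero] at hs
      simp [hs]
    · exact absurd hs.symm (hU.2.2 A l.sum (hl A (by simp)).1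
        (zs_sum l fun B hB => (hl B (by simp [hB])).1) (hl A (by simp)).2.1 h)

lemma exists_cover [DecidableEq G] (l : Multiset (Multiset G)) : ∀ W : Multiset G, W ≤ l.sum →
    ∃ l' ≤ l, Multiset.card l' ≤ Multiset.card W ∧ W ≤ l'.sum := by
  induction l using Multiset.induction_on with
  | empty => intro W hW; exact ⟨0, le_rfl, by simp, hW⟩
  | cons A l ih =>
    intro W hW
    rw [Multiset.sum_cons] at hW
    have h1 : W - A ≤ l.sum := by rw [tsub_le_iff_left]; exact hW
    obtain ⟨l', hl', hc, hle⟩ := ih _ h1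
    have h3 : W - A ≤ W := tsub_le_self
    rcases h3.eq_or_lt with h | h
    · rw [h] at hc hle
      exact ⟨l', hl'.trans (Multiset.le_cons_self _ _), hc, hle⟩
    · refine ⟨A ::ₘ l', Multiset.cons_le_cons _ hl', ?_, ?_⟩
      · have := Multiset.card_lt_card h
        rw [Multiset.card_cons]; omega
      · rw [Multiset.sum_cons]
        exact tsub_le_iff_left.1 hle

lemma min_le_diff (G₀ : Set G) (l1 l2 : Multiset (Multiset G))
    (h1 : ∀ A ∈ l1, IsAtomSeq G₀ A) (h2 : ∀ A ∈ l2, IsAtomSeq G₀ A) (hs : l1.sum = l2.sum)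
    (hlt : Multiset.card l1 < Multiset.card l2) :
    sInf (DeltaSet G₀) ≤ Multiset.card l2 - Multiset.card l1 := by
  classical
  set L := LengthSet G₀ l1.sum with hL
  have ha : Multiset.card l1 ∈ L := ⟨l1, rfl, h1, rfl⟩
  have hb : Multiset.card l2 ∈ L := ⟨l2, rfl, h2, hs.symm⟩
  have hex : ∃ y, y ∈ L ∧ Multiset.card l1 < y := ⟨_, hb, hlt⟩
  have hy := Nat.find_spec hex
  have hyle : Nat.find hex ≤ Multiset.card l2 := Nat.find_min' hex ⟨hb, hlt⟩
  have hmem : Nat.find hex - Multiset.card l1 ∈ DeltaSet G₀ := by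
    refine ⟨l1.sum, zs_sum _ fun A hA => (h1 A hA).1, ?_, _, ha, _, hy.1, hy.2, rfl, ?_⟩
    · rw [hs]
      obtain ⟨A, hA⟩ := Multiset.card_pos_iff_exists_mem.1 (by omega : 0 < Multiset.card l2)
      obtain ⟨t, rfl⟩ := Multiset.exists_cons_of_mem hA
      rw [Multiset.sum_cons]
      intro h0
      exact (h2 A hA).2.1 (add_eq_zero.1 h0).1
    · rintro z hz ⟨hz1, hz2⟩
      exact Nat.find_min hex hz2 ⟨hz, hz1⟩
  exact (Nat.sInf_le hmem).trans (by omega)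

section Fin
variable [Fintype G]

lemma ord_pos (g : G) : 0 < addOrderOf g := addOrderOf_pos g

lemma zs_repl {G₀ : Set G} {g : G} (hg : g ∈ G₀) (k : ℕ) :
    IsZeroSumSeq G₀ (Multiset.replicate (k * addOrderOf g) g) := by
  refine ⟨fun x hx => ?_, ?_⟩
  · rw [Multiset.eq_of_mem_replicate hx]; exact hg
  · rw [Multiset.sum_replicate, mul_smul, addOrderOf_nsmul_eq_zero, smul_zero]

lemma atom_repl {G₀ : Set G} {g : G} (hg : g ∈ G₀) :
    IsAtomSeq G₀ (Multiset.replicate (addOrderOf g) g) := by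
  refine ⟨by simpa using zs_repl hg 1, ?_, ?_⟩
  · intro h
    have := congrArg Multiset.card h
    have h1 := ord_pos g
    rw [Multiset.card_replicate, Multiset.card_zero] at this
    omega
  · intro A B hA hB hA0 hB0 h
    have hAr : A = Multiset.replicate (Multiset.card A) g :=
      Multiset.eq_replicate_card.2 fun x hx =>
        Multiset.eq_of_mem_replicate (n := addOrderOf g) (by rw [h]; exact Multiset.mem_add.2 (Or.inl hx))
    have hs := hA.2
    rw [hAr, Multiset.sum_replicate] at hs
    have hd := Nat.le_of_dvd (Multiset.card_pos.2 hA0) (addOrderOf_dvd_of_nsmul_eq_zero hs)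
    have hc := congrArg Multiset.card h
    have := Multiset.card_pos.2 hB0
    simp at hc
    omega

lemma cn_repl (g : G) : crossNumber (Multiset.replicate (addOrderOf g) g) = 1 := by
  have := ord_pos g
  simp only [crossNumber, Multiset.map_replicate, Multiset.sum_replicate, nsmul_eq_mul]
  field_simp

lemma exp_pos : 0 < AddMonoid.exponent G :=
  Nat.pos_of_ne_zero AddMonoid.exponent_ne_zero_of_finite

lemma card_le_exp_mul (W : Multiset G) :
    (Multiset.card W : ℚ) ≤ AddMonoid.exponent G * crossNumber W := by
  induction W using Multiset.induction_on with
  | empty => simp [cn_zero]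
  | cons g W ih =>
    have h1 : crossNumber (g ::ₘ W) = (addOrderOf g : ℚ)⁻¹ + crossNumber W := by
      simp [crossNumber]
    rw [h1, mul_add, Multiset.card_cons]
    have h2 : (addOrderOf g : ℚ) ≤ AddMonoid.exponent G := by
      exact_mod_cast Nat.le_of_dvd exp_pos (AddMonoid.addOrder_dvd_exponent g)
    have h3 : (0 : ℚ) < addOrderOf g := by exact_mod_cast ord_pos g
    have h4 : (1 : ℚ) ≤ AddMonoid.exponent G * (addOrderOf g : ℚ)⁻¹ := by
      rw [← div_eq_mul_inv, le_div_iff₀ h3]; linarith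
    push_cast
    linarith

/-- Factorization of `n • U` through the `g ^ ord g`. -/
lemma pow_fact (n : ℕ) (hn : ∀ g : G, addOrderOf g ∣ n) {G₀ : Set G} (U : Multiset G)
    (hU : ∀ x ∈ U, x ∈ G₀) : ∃ l : Multiset (Multiset G), (∀ A ∈ l, IsAtomSeq G₀ A) ∧
      l.sum = n • U ∧ (Multiset.card l : ℚ) = n * crossNumber U := by
  induction U using Multiset.induction_on with
  | empty => exact ⟨0, by simp, by simp, by simp [cn_zero]⟩
  | cons g U ih =>
    obtain ⟨l, hl, hs, hc⟩ := ih fun x hx => hU x (by simp [hx])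
    obtain ⟨k, hk⟩ := hn g
    refine ⟨Multiset.replicate k (Multiset.replicate (addOrderOf g) g) + l, ?_, ?_, ?_⟩
    · intro A hA
      rcases Multiset.mem_add.1 hA with h | h
      · rw [Multiset.eq_of_mem_replicate h]; exact atom_repl (hU g (by simp))
      · exact hl A h
    · rw [Multiset.sum_add, hs, Multiset.sum_replicate, ← Multiset.singleton_add, smul_add,
        Multiset.nsmul_singleton, Multiset.nsmul_replicate, hk, mul_comm]
    · have h1 : crossNumber (g ::ₘ U) = (addOrderOf g : ℚ)⁻¹ + crossNumber U := by
        simp [crossNumber]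
      have h3 : (addOrderOf g : ℚ) ≠ 0 := by exact_mod_cast (ord_pos g).ne'
      rw [h1, Multiset.card_add, Multiset.card_replicate]
      push_cast
      rw [hc, mul_add]
      congr 1
      rw [hk]; push_cast; field_simp

/-- Non-LCN case. -/
lemma lcn_of {G₀ : Set G} (hd : AddMonoid.exponent G - 2 < sInf (DeltaSet G₀)) :
    ∀ U, IsAtomSeq G₀ U → 1 ≤ crossNumber U := by
  intro U hU
  by_contra hlt
  push Not at hlt
  set n := AddMonoid.exponent G with hn
  have hnpos : 0 < n := exp_pos
  obtain ⟨l, hl, hs, hc⟩ := pow_fact n (fun g => AddMonoid.addOrder_dvd_exponent g) U hU.1.1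
  have hcard : 2 ≤ Multiset.card U := by
    by_contra hh
    have h0 := Multiset.card_pos.2 hU.2.1
    have h1 : Multiset.card U = 1 := by omega
    obtain ⟨g, rfl⟩ := Multiset.card_eq_one.1 h1
    have : g = 0 := by simpa using hU.1.2
    subst this
    simp [crossNumber] at hlt
  have h2 := card_le_exp_mul U
  rw [← hn, ← hc] at h2
  have h2' : Multiset.card U ≤ Multiset.card l := by exact_mod_cast h2
  have h3 : (Multiset.card l : ℚ) < n := by
    rw [hc]
    have : (0 : ℚ) < n := by exact_mod_cast hnpos
    nlinarith
  have h3' : Multiset.card l < n := by exact_mod_cast h3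
  have := min_le_diff G₀ l (Multiset.replicate n U) hl
    (fun A hA => by rw [Multiset.eq_of_mem_replicate hA]; exact hU)
    (by rw [hs, Multiset.sum_replicate]) (by simpa using h3')
  rw [Multiset.card_replicate] at this
  omega

/-- `B` is a sum of atoms of cross number one. -/
def GoodSeq (G₀ : Set G) (B : Multiset G) : Prop :=
  ∃ l : Multiset (Multiset G), (∀ A ∈ l, IsAtomSeq G₀ A ∧ crossNumber A = 1) ∧ l.sum = B

lemma good_add {G₀ : Set G} {A B : Multiset G} (hA : GoodSeq G₀ A) (hB : GoodSeq G₀ B) :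
    GoodSeq G₀ (A + B) := by
  obtain ⟨l1, h1, rfl⟩ := hA
  obtain ⟨l2, h2, rfl⟩ := hB
  refine ⟨l1 + l2, fun D hD => ?_, by rw [Multiset.sum_add]⟩
  rcases Multiset.mem_add.1 hD with h | h
  · exact h1 D h
  · exact h2 D h

lemma good_zero {G₀ : Set G} : GoodSeq G₀ (0 : Multiset G) := ⟨0, by simp, by simp⟩

lemma good_cancel_one {G₀ : Set G} (hd : AddMonoid.exponent G - 2 < sInf (DeltaSet G₀))
    {B W : Multiset G} (hB : IsZeroSumSeq G₀ B) (hW : IsAtomSeq G₀ W) (hW1 : crossNumber W = 1)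
    (hBW : GoodSeq G₀ (B + W)) : GoodSeq G₀ B := by
  classical
  have lcn := lcn_of hd
  obtain ⟨l, hl, hs⟩ := hBW
  obtain ⟨l', hl', hc, hle⟩ := exists_cover l W (by rw [hs]; exact Multiset.le_add_left _ _)
  obtain ⟨l'', rfl⟩ := Multiset.le_iff_exists_add.1 hl'
  obtain ⟨R, hR⟩ := Multiset.le_iff_exists_add.1 hle
  have hBR : B = R + l''.sum := by
    rw [Multiset.sum_add, hR] at hs
    have : W + (R + l''.sum) = W + B := by rw [← add_assoc, hs, add_comm]
    exact (add_left_cancel this).symm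
  have hl1 : ∀ A ∈ l', IsAtomSeq G₀ A ∧ crossNumber A = 1 := fun A hA => hl A (by simp [hA])
  have hRz : IsZeroSumSeq G₀ R := by
    apply zs_of_add hW.1
    rw [← hR]
    exact zs_sum _ fun A hA => (hl1 A hA).1.1
  have hg2 : GoodSeq G₀ l''.sum := ⟨l'', fun A hA => hl A (by simp [hA]), rfl⟩
  rw [hBR]
  refine good_add ?_ hg2
  by_cases hR0 : R = 0
  · rw [hR0]; exact good_zero
  obtain ⟨lR, hlR, hsR⟩ := fact R hRz
  have hlRpos : 0 < Multiset.card lR := by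
    rw [Multiset.card_pos]
    rintro rfl
    exact hR0 (by simpa using hsR.symm)
  have hk := cn_sum_eq l' fun A hA => (hl1 A hA).2
  rw [hR, cn_add, hW1] at hk
  have hge := cn_sum_ge lR fun A hA => lcn A (hlR A hA)
  rw [hsR] at hge
  have hcle : Multiset.card lR + 1 ≤ Multiset.card l' := by
    have : ((Multiset.card lR + 1 : ℕ) : ℚ) ≤ Multiset.card l' := by push_cast; linarith
    exact_mod_cast this
  have hWn : Multiset.card W ≤ AddMonoid.exponent G := by
    have := card_le_exp_mul W
    rw [hW1, mul_one] at this
    exact_mod_cast this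
  rcases hcle.lt_or_eq with h | h
  · have := min_le_diff G₀ (W ::ₘ lR) l'
      (fun A hA => by
        rcases Multiset.mem_cons.1 hA with h | h
        · rw [h]; exact hW
        · exact hlR A h) (fun A hA => (hl1 A hA).1) (by rw [Multiset.sum_cons, hsR, hR])
      (by rw [Multiset.card_cons]; exact h)
    rw [Multiset.card_cons] at this
    omega
  · refine ⟨lR, fun A hA => ⟨hlR A hA, ?_⟩, hsR⟩
    refine cn_sum_eq' lR (fun A hA => lcn A (hlR A hA)) ?_ A hA
    rw [hsR]
    rw [← h] at hk
    push_cast at hk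
    linarith

lemma good_zs {G₀ : Set G} {B : Multiset G} (h : GoodSeq G₀ B) : IsZeroSumSeq G₀ B := by
  obtain ⟨l, hl, rfl⟩ := h
  exact zs_sum _ fun A hA => (hl A hA).1.1

lemma good_cancel {G₀ : Set G} (hd : AddMonoid.exponent G - 2 < sInf (DeltaSet G₀))
    {B C : Multiset G} (hB : IsZeroSumSeq G₀ B) (hC : GoodSeq G₀ C)
    (hBC : GoodSeq G₀ (B + C)) : GoodSeq G₀ B := by
  obtain ⟨l, hl, rfl⟩ := hC
  induction l using Multiset.induction_on with
  | empty => simpa using hBC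
  | cons W l ih =>
    have hl' : ∀ A ∈ l, IsAtomSeq G₀ A ∧ crossNumber A = 1 := fun A hA => hl A (by simp [hA])
    refine ih hl' ?_
    refine good_cancel_one hd (zs_add hB (zs_sum _ fun A hA => (hl' A hA).1.1))
      (hl W (by simp)).1 (hl W (by simp)).2 ?_
    rw [Multiset.sum_cons] at hBC
    rwa [add_assoc, add_comm l.sum W]

/-- The bound through the size of the support. -/
lemma card_supp [DecidableEq G] {G₀ : Set G} (lcn : ∀ U, IsAtomSeq G₀ U → 1 ≤ crossNumber U)
    {U : Multiset G} (hU : IsAtomSeq G₀ U) (hk : 1 < crossNumber U) :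
    sInf (DeltaSet G₀) + 2 ≤ U.toFinset.card := by
  set P : Multiset (Multiset G) :=
    U.toFinset.val.map (fun g => Multiset.replicate (addOrderOf g) g) with hP
  have hPat : ∀ A ∈ P, IsAtomSeq G₀ A ∧ crossNumber A = 1 := by
    intro A hA
    obtain ⟨g, hg, rfl⟩ := Multiset.mem_map.1 hA
    have hgU : g ∈ U := by simpa using hg
    exact ⟨atom_repl (hU.1.1 g hgU), cn_repl g⟩
  have hPcard : Multiset.card P = U.toFinset.card := by rw [hP, Multiset.card_map]; rfl
  have hcount : ∀ g ∈ U, U.count g < addOrderOf g := by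
    intro g hg
    by_contra hcon
    push Not at hcon
    have hle := Multiset.le_count_iff_replicate_le.1 hcon
    obtain ⟨C, hC⟩ := Multiset.le_iff_exists_add.1 hle
    have hat := atom_repl (hU.1.1 g hg)
    by_cases hC0 : C = 0
    · rw [hC0, add_zero] at hC
      rw [hC, cn_repl] at hk
      exact lt_irrefl _ hk
    · exact hU.2.2 _ C hat.1 (zs_of_add hat.1 (hC ▸ hU.1)) hat.2.1 hC0 hC
  have hPc : ∀ g ∈ U, P.sum.count g = addOrderOf g := by
    intro g hg
    have : P.sum = ∑ x ∈ U.toFinset, Multiset.replicate (addOrderOf x) x := rfl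
    rw [this, Multiset.count_sum']
    simp [Multiset.count_replicate, hg]
  have hle : U ≤ P.sum := by
    rw [Multiset.le_iff_count]
    intro g
    by_cases hg : g ∈ U
    · rw [hPc g hg]; exact (hcount g hg).le
    · rw [Multiset.count_eq_zero_of_notMem hg]; exact Nat.zero_le _
  obtain ⟨X, hX⟩ := Multiset.le_iff_exists_add.1 hle
  have hXz : IsZeroSumSeq G₀ X := by
    apply zs_of_add hU.1
    rw [← hX]
    exact zs_sum _ fun A hA => (hPat A hA).1.1
  have hX0 : X ≠ 0 := by
    rintro rfl
    obtain ⟨g, hg⟩ := Multiset.exists_mem_of_ne_zero hU.2.1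
    have h1 := hPc g hg
    rw [hX, add_zero] at h1
    have := hcount g hg
    omega
  obtain ⟨l, hl, hs⟩ := fact X hXz
  have hlpos : 0 < Multiset.card l := by
    rw [Multiset.card_pos]
    rintro rfl
    exact hX0 (by simpa using hs.symm)
  have h1 := cn_sum_eq P fun A hA => (hPat A hA).2
  rw [hX, cn_add] at h1
  have h2 := cn_sum_ge l fun A hA => lcn A (hl A hA)
  rw [hs] at h2
  have h3 : Multiset.card l + 1 < Multiset.card P := by
    have : ((Multiset.card l + 1 : ℕ) : ℚ) < Multiset.card P := by push_cast; linarith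
    exact_mod_cast this
  have := min_le_diff G₀ (U ::ₘ l) P
      (fun A hA => by
        rcases Multiset.mem_cons.1 hA with h | h
        · rw [h]; exact hU
        · exact hl A h) (fun A hA => (hPat A hA).1) (by rw [Multiset.sum_cons, hs, hX])
      (by rw [Multiset.card_cons]; exact h3)
  rw [Multiset.card_cons] at this
  omega

/-- The subgroup generated by the good sequences. -/
def goodSub [DecidableEq G] (G₀ : Set G) : AddSubgroup (G → ℤ) where
  carrier := {x | ∃ C D : Multiset G, GoodSeq G₀ C ∧ GoodSeq G₀ D ∧
    ∀ g, x g = (C.count g : ℤ) - D.count g}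
  zero_mem' := ⟨0, 0, good_zero, good_zero, by simp⟩
  add_mem' := by
    rintro x y ⟨C, D, hC, hD, h⟩ ⟨C', D', hC', hD', h'⟩
    refine ⟨C + C', D + D', good_add hC hC', good_add hD hD', fun g => ?_⟩
    simp only [Pi.add_apply, h, h', Multiset.count_add]
    push_cast; ring
  neg_mem' := by
    rintro x ⟨C, D, hC, hD, h⟩
    refine ⟨D, C, hD, hC, fun g => ?_⟩
    simp [h]

lemma rel_mem [DecidableEq G] {G₀ : Set G} (T : Set G)
    (hT : ∀ B : Multiset G, IsZeroSumSeq T B → GoodSeq G₀ B) (x : G → ℤ)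
    (hx : ∀ g, x g ≠ 0 → g ∈ T) (hs : ∑ g, x g • g = 0) : x ∈ goodSub G₀ := by
  set c : G → ℕ := fun g => (x g + (x g).natAbs * addOrderOf g).toNat with hc
  have hcz : ∀ g, (c g : ℤ) = x g + (x g).natAbs * addOrderOf g := by
    intro g
    rw [hc]
    apply Int.toNat_of_nonneg
    have h1 : (1 : ℤ) ≤ addOrderOf g := by exact_mod_cast ord_pos g
    have h2 : (0 : ℤ) ≤ (x g).natAbs := by positivity
    have h3 : -x g ≤ (x g).natAbs := by omega
    nlinarith
  refine ⟨∑ g, Multiset.replicate (c g) g,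
    ∑ g, Multiset.replicate ((x g).natAbs * addOrderOf g) g, hT _ ⟨?_, ?_⟩, hT _ ⟨?_, ?_⟩, ?_⟩
  · intro g hg
    obtain ⟨y, -, hy⟩ := Multiset.mem_sum.1 hg
    obtain rfl := Multiset.eq_of_mem_replicate hy
    apply hx
    intro h0
    rw [Multiset.mem_replicate] at hy
    apply hy.1
    simp [hc, h0]
  · rw [Multiset.sum_sum]
    simp only [Multiset.sum_replicate]
    rw [← hs]
    refine Finset.sum_congr rfl fun g _ => ?_
    have h0 : (addOrderOf g : ℤ) • g = 0 := by rw [natCast_zsmul, addOrderOf_nsmul_eq_zero]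
    rw [← natCast_zsmul, hcz, add_smul, mul_smul, h0, smul_zero, add_zero]
  · intro g hg
    obtain ⟨y, -, hy⟩ := Multiset.mem_sum.1 hg
    obtain rfl := Multiset.eq_of_mem_replicate hy
    apply hx
    intro h0
    rw [Multiset.mem_replicate] at hy
    apply hy.1
    simp [h0]
  · rw [Multiset.sum_sum]
    refine Finset.sum_eq_zero fun g _ => ?_
    rw [Multiset.sum_replicate, mul_smul, addOrderOf_nsmul_eq_zero, smul_zero]
  · intro g
    rw [Multiset.count_sum', Multiset.count_sum']
    simp only [Multiset.count_replicate]
    simp [hcz]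

/-- `S` generates `I` locally at `p`. -/
def LocGen (p : ℕ) (I S : Finset G) : Prop :=
  ∀ g ∈ I, ∃ m : ℤ, ¬ (p : ℤ) ∣ m ∧ ∃ y : G → ℤ, m • g = ∑ s ∈ S, y s • s

lemma card_quot_le (p : ℕ) (A : AddSubgroup G) :
    Nat.card (A ⧸ (nsmulAddMonoidHom (α := A) p).range) ≤ Nat.card {x : G // p • x = 0} := by
  set f := nsmulAddMonoidHom (α := A) p with hf
  have h1 : Nat.card f.range * f.range.index = Nat.card A := AddSubgroup.card_mul_index _
  have h2 : Nat.card f.ker * f.ker.index = Nat.card A := AddSubgroup.card_mul_index _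
  rw [AddSubgroup.index_ker] at h2
  have h3 : 0 < Nat.card f.range := Nat.card_pos
  have h4 : f.range.index = Nat.card f.ker := by
    apply Nat.eq_of_mul_eq_mul_left h3
    rw [h1, ← h2, mul_comm]
  change f.range.index ≤ _
  rw [h4]
  refine Nat.card_le_card_of_injective
    (fun a : f.ker => (⟨((a : A) : G), ?_⟩ : {x : G // p • x = 0})) ?_
  · have := a.2
    rw [AddMonoidHom.mem_ker] at this
    have h5 := congrArg (fun z : A => (z : G)) this
    simpa [hf] using h5
  · intro a b hab
    simp only [Subtype.mk.injEq] at hab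
    exact Subtype.ext (Subtype.ext hab)

lemma sum_mem_closure (S : Finset G) (y : G → ℤ) :
    ∑ s ∈ S, y s • s ∈ AddSubgroup.closure (S : Set G) :=
  AddSubgroup.sum_mem _ fun s hs =>
    AddSubgroup.zsmul_mem _ (AddSubgroup.subset_closure hs) _

lemma mem_closure_sum [DecidableEq G] (S : Finset G) (a : G)
    (ha : a ∈ AddSubgroup.closure (S : Set G)) : ∃ y : G → ℤ, a = ∑ s ∈ S, y s • s := by
  induction ha using AddSubgroup.closure_induction with
  | mem x hx =>
    have hx' : x ∈ S := hx
    refine ⟨fun s => if s = x then 1 else 0, ?_⟩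
    simp [ite_smul, hx']
  | zero => exact ⟨0, by simp⟩
  | add x y _ _ hx hy =>
    obtain ⟨u, hu⟩ := hx
    obtain ⟨v, hv⟩ := hy
    refine ⟨u + v, ?_⟩
    rw [hu, hv, ← Finset.sum_add_distrib]
    exact Finset.sum_congr rfl fun s _ => by simp [add_smul]
  | neg x _ hx =>
    obtain ⟨u, hu⟩ := hx
    exact ⟨-u, by rw [hu]; simp⟩

lemma locGen_card [DecidableEq G] {p : ℕ} (hp : p.Prime) (I : Finset G) :
    ∃ S ⊆ I, LocGen p I S ∧ S.card ≤ pRank G p := by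
  classical
  have hex : ∃ k, ∃ S ⊆ I, LocGen p I S ∧ S.card = k := by
    refine ⟨_, I, subset_rfl, fun g hg => ⟨1, ?_, fun s => if s = g then 1 else 0, ?_⟩, rfl⟩
    · intro h
      have := Int.natAbs_dvd_natAbs.2 h
      simp at this
      exact hp.one_lt.ne' this
    · simp [ite_smul, hg]
  have hpZ : Prime (p : ℤ) := Nat.prime_iff_prime_int.1 hp
  obtain ⟨S, hSI, hS, hSc⟩ := Nat.find_spec hex
  have hmin : ∀ S' ⊆ I, LocGen p I S' → S.card ≤ S'.card := by
    intro S' h1 h2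
    rw [hSc]
    exact Nat.find_min' hex ⟨S', h1, h2, rfl⟩
  refine ⟨S, hSI, hS, ?_⟩
  -- independence modulo p
  have hind : ∀ c : G → ℤ, ∑ s ∈ S, c s • s = 0 → ∀ s ∈ S, (p : ℤ) ∣ c s := by
    intro c hc s0 hs0
    by_contra hnd
    have hle := hmin (S.erase s0) ((Finset.erase_subset _ _).trans hSI) (by
      intro g hg
      obtain ⟨m, hm, y, hy⟩ := hS g hg
      refine ⟨c s0 * m, fun h => ?_, fun s => c s0 * y s - y s0 * c s, ?_⟩
      · rcases hpZ.dvd_or_dvd h with h | h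
        · exact hnd h
        · exact hm h
      · rw [← Finset.add_sum_erase _ _ hs0] at hc hy
        have hc' : c s0 • s0 = - ∑ s ∈ S.erase s0, c s • s := eq_neg_of_add_eq_zero_left hc
        rw [mul_smul, hy, smul_add, smul_smul, mul_comm (c s0), ← smul_smul, hc']
        simp only [sub_smul, mul_smul, Finset.sum_sub_distrib, ← Finset.smul_sum, smul_neg]
        abel)
    rw [Finset.card_erase_of_mem hs0] at hle
    have := Finset.card_pos.2 ⟨s0, hs0⟩
    omega
  set A := AddSubgroup.closure (S : Set G) with hA
  have hcard : p ^ S.card ≤ Nat.card {x : G // p • x = 0} := by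
    refine le_trans ?_ (card_quot_le p A)
    have hc : Nat.card (S → Fin p) = p ^ S.card := by simp
    rw [← hc]
    let ext : (S → Fin p) → G → ℤ := fun a g => if h : g ∈ S then ((a ⟨g, h⟩ : ℕ) : ℤ) else 0
    refine Nat.card_le_card_of_injective
      (fun a : S → Fin p => (QuotientAddGroup.mk
        (⟨∑ s ∈ S, ext a s • s, sum_mem_closure S _⟩ : A) :
          A ⧸ (nsmulAddMonoidHom (α := A) p).range)) ?_
    intro a b hab
    simp only at hab
    rw [QuotientAddGroup.eq] at hab
    obtain ⟨z, hz⟩ := hab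
    obtain ⟨w, hw⟩ := mem_closure_sum S z z.2
    have hz' := congrArg (fun t : A => (t : G)) hz
    simp only [nsmulAddMonoidHom_apply, AddSubgroup.coe_nsmul, AddSubgroup.coe_add,
      AddSubgroup.coe_neg] at hz'
    have hrel : ∑ s ∈ S, (ext b s - ext a s - p * w s) • s = 0 := by
      simp only [sub_smul, mul_smul, Finset.sum_sub_distrib, ← Finset.smul_sum, ← hw]
      rw [natCast_zsmul, hz']
      abel
    have hdv := hind _ hrel
    funext s
    have h1 := hdv s s.2
    have h2 : (p : ℤ) ∣ ext b s - ext a s := by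
      have := dvd_add h1 (dvd_mul_right (p : ℤ) (w s))
      simpa using this
    simp only [ext, s.2, dif_pos] at h2
    have h3 := (a s).2
    have h4 := (b s).2
    have h5 := Int.eq_zero_of_abs_lt_dvd h2 (by rw [abs_lt]; constructor <;> simp <;> omega)
    apply Fin.ext
    simp at h5
    omega
  haveI : Nonempty {x : G // p • x = 0} := ⟨⟨0, smul_zero p⟩⟩
  exact (Nat.le_log_iff_pow_le hp.one_lt Nat.card_pos.ne').2 hcard

lemma pRank_le {p : ℕ} (hp : p.Prime) : pRank G p ≤ rankG G := by
  refine le_csSup ⟨Nat.card G, ?_⟩ ⟨p, hp, rfl⟩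
  rintro r ⟨q, hq, rfl⟩
  exact (Nat.log_le_self _ _).trans
    (Nat.card_le_card_of_injective _ Subtype.val_injective)

end Fin

end Aux

theorem stmt_1 {G : Type*} [AddCommGroup G] [Fintype G] (G₀ : Set G)
    (hG₀ : (DeltaSet G₀).Nonempty) :
    sInf (DeltaSet G₀) ≤ max (AddMonoid.exponent G - 2) (rankG G - 1) := by
  classical
  by_contra hcon
  push Not at hcon
  obtain ⟨hd, hr⟩ := max_lt_iff.1 hcon
  have lcn := lcn_of hd
  -- an atom of cross number > 1
  have hex : ∃ k, ∃ U, IsAtomSeq G₀ U ∧ 1 < crossNumber U ∧ U.toFinset.card = k := by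
    by_contra hno
    obtain ⟨_, B, -, -, x, ⟨l1, rfl, h1, hs1⟩, y, ⟨l2, rfl, h2, hs2⟩, hxy, -, -⟩ := hG₀
    have hone : ∀ A, IsAtomSeq G₀ A → crossNumber A = 1 := by
      intro A hA
      rcases (lcn A hA).lt_or_eq with h | h
      · exact absurd ⟨_, A, hA, h, rfl⟩ hno
      · exact h.symm
    have e1 := cn_sum_eq l1 fun A hA => hone A (h1 A hA)
    have e2 := cn_sum_eq l2 fun A hA => hone A (h2 A hA)
    rw [hs1] at e1
    rw [hs2, e1] at e2
    have : Multiset.card l1 = Multiset.card l2 := by exact_mod_cast e2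
    omega
  obtain ⟨U, hU, hk, hUc⟩ := Nat.find_spec hex
  have hmin : ∀ V, IsAtomSeq G₀ V → V.toFinset ⊂ U.toFinset → crossNumber V = 1 := by
    intro V hV hss
    rcases (lcn V hV).lt_or_eq with h | h
    · have := Nat.find_min' hex ⟨V, hV, h, rfl⟩
      have h2 := Finset.card_lt_card hss
      omega
    · exact h.symm
  have hN := card_supp lcn hU hk
  set I := U.toFinset with hI
  have hprop : ∀ j ∈ I, ∀ B : Multiset G, IsZeroSumSeq ((I.erase j : Finset G) : Set G) B →
      GoodSeq G₀ B := by
    intro j hj B hB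
    have hB' : IsZeroSumSeq G₀ B := ⟨fun x hx => by
      have := hB.1 x hx
      have h2 : x ∈ I := Finset.mem_of_mem_erase (by exact_mod_cast this)
      exact hU.1.1 x (by simpa [hI] using h2), hB.2⟩
    obtain ⟨l, hl, hs⟩ := fact B hB'
    refine ⟨l, fun A hA => ⟨hl A hA, hmin A (hl A hA) ?_⟩, hs⟩
    refine lt_of_le_of_lt ?_ (Finset.erase_ssubset hj)
    intro x hx
    have hxA : x ∈ A := by simpa using hx
    have hxB : x ∈ B := by
      rw [← hs]
      exact Multiset.mem_of_le (Multiset.single_le_sum (fun _ _ => Multiset.zero_le _) A hA) hxA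
    exact_mod_cast hB.1 x hxB
  set u : G → ℤ := fun g => (U.count g : ℤ) with hu
  have huI : ∀ g, u g ≠ 0 → g ∈ I := by
    intro g hg
    by_contra h
    apply hg
    simp only [hu]
    rw [Multiset.count_eq_zero_of_notMem (by simpa [hI] using h)]
    rfl
  have husum : ∑ g, u g • g = 0 := by
    have h1 := hU.1.2
    rw [Finset.sum_multiset_count] at h1
    rw [← h1]
    symm
    simp only [hu, natCast_zsmul]
    refine Finset.sum_subset (Finset.subset_univ _) fun g _ hg => ?_
    rw [Multiset.count_eq_zero_of_notMem (by simpa using hg), zero_smul]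
  -- local statement
  have hloc : ∀ p : ℕ, p.Prime → ∃ m : ℤ, ¬ (p : ℤ) ∣ m ∧ m • u ∈ goodSub G₀ := by
    intro p hp
    obtain ⟨S, hSI, hS, hSc⟩ := locGen_card hp I
    have hSr := hSc.trans (pRank_le hp)
    have hcard : 2 ≤ (I \ S).card := by
      rw [Finset.card_sdiff_of_subset hSI]
      omega
    obtain ⟨i, hi, j, hj, hij⟩ := Finset.one_lt_card.1 hcard
    rw [Finset.mem_sdiff] at hi hj
    obtain ⟨m, hm, y, hy⟩ := hS i hi.1
    refine ⟨m, hm, ?_⟩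
    set z : G → ℤ := fun g => if g = i then m else if g ∈ S then - y g else 0 with hz
    have hzi : z i = m := by simp [hz]
    have hzsum : ∑ g, z g • g = 0 := by
      have h1 : ∀ g, z g • g = (if g = i then m • g else 0) - (if g ∈ S then y g • g else 0) := by
        intro g
        simp only [hz]
        by_cases h : g = i
        · subst h; simp [hi.2]
        · by_cases h2 : g ∈ S <;> simp [h, h2]
      simp only [h1, Finset.sum_sub_distrib]
      simp [hy]
    have hzmem : z ∈ goodSub G₀ := by
      refine rel_mem _ (hprop j hj.1) z (fun g hg => ?_) hzsum
      simp only [hz] at hg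
      by_cases h : g = i
      · subst h; simp [hij, hi.1]
      · by_cases h2 : g ∈ S
        · have h3 : g ≠ j := fun h => hj.2 (h ▸ h2)
          simp [h3, hSI h2]
        · simp [h, h2] at hg
    have hrest : m • u - u i • z ∈ goodSub G₀ := by
      refine rel_mem _ (hprop i hi.1) _ (fun g hg => ?_) ?_
      · by_cases h : g = i
        · subst h
          exfalso; apply hg
          simp [hzi, mul_comm]
        · have hgI : g ∈ I := by
            by_contra hgI
            apply hg
            have h1 : u g = 0 := by by_contra h1; exact hgI (huI g h1)
            have h2 : z g = 0 := by
              simp only [hz, if_neg h]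
              rw [if_neg fun h2 => hgI (hSI h2)]
            simp [h1, h2]
          simp [h, hgI]
      · simp only [Pi.sub_apply, Pi.smul_apply, smul_eq_mul, sub_smul, mul_smul,
          Finset.sum_sub_distrib, ← Finset.smul_sum, husum, hzsum]
        simp
    have := (goodSub G₀).add_mem hrest ((goodSub G₀).zsmul_mem hzmem (u i))
    simpa using this
  have humem : u ∈ goodSub G₀ := by
    obtain ⟨c, hc⟩ := Int.subgroup_cyclic ((goodSub G₀).comap (zmultiplesHom (G → ℤ) u))
    have hmemc : ∀ m : ℤ, m • u ∈ goodSub G₀ ↔ c ∣ m := by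
      intro m
      have : m ∈ (goodSub G₀).comap (zmultiplesHom (G → ℤ) u) ↔ m • u ∈ goodSub G₀ := by
        simp [AddSubgroup.mem_comap]
      rw [← this, hc, ← AddSubgroup.zmultiples_eq_closure, Int.mem_zmultiples_iff]
    have h1 : c.natAbs = 1 := by
      by_contra hne
      obtain ⟨p, hp, hpc⟩ := Nat.exists_prime_and_dvd hne
      obtain ⟨m, hm, hmu⟩ := hloc p hp
      exact hm ((Int.natCast_dvd.2 hpc).trans ((hmemc m).1 hmu))
    have := (hmemc 1).2 (Int.isUnit_iff_natAbs_eq.2 h1).dvd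
    simpa using this
  obtain ⟨C, D, hC, hD, hCD⟩ := humem
  have hUD : U + D = C := by
    ext g
    have := hCD g
    simp only [hu] at this
    rw [Multiset.count_add]
    omega
  obtain ⟨l, hl, hs⟩ := good_cancel hd hU.1 hD (hUD ▸ hC)
  have := (hl U (atom_fact hU l (fun A hA => (hl A hA).1) hs)).2
  rw [this] at hk
  exact lt_irrefl _ hk
end

section
/- Let G be a finite abelian group with exp(G) = n and let G₀ ⊆ G be a minimal non-half-factorial LCN-set. Suppose there exists a subset G₂ ⊆ G₀ with ⟨G₂⟩ = ⟨G₀⟩ and |G₂| ≤ |G₀| − 2. Then min Δ(G₀) ≤ max {1, n − 4}. -/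
open Multiset

theorem crossNumber_add {G : Type*} [AddCommGroup G] (A B : Multiset G) :
    crossNumber (A + B) = crossNumber A + crossNumber B := by
  simp [crossNumber]

theorem crossNumber_zero {G : Type*} [AddCommGroup G] :
    crossNumber (0 : Multiset G) = 0 := by
  simp [crossNumber]

theorem crossNumber_nonneg {G : Type*} [AddCommGroup G] (A : Multiset G) :
    0 ≤ crossNumber A := by
  induction A using Multiset.induction_on with
  | empty => simp [crossNumber]
  | cons a s ih =>
    have : crossNumber (a ::ₘ s) = ((addOrderOf a : ℚ))⁻¹ + crossNumber s := by
      simp [crossNumber]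
    rw [this]; positivity

theorem crossNumber_nsmul {G : Type*} [AddCommGroup G] (n : ℕ) (A : Multiset G) :
    crossNumber (n • A) = n * crossNumber A := by
  induction n with
  | zero => simp [crossNumber]
  | succ k ih => rw [succ_nsmul, crossNumber_add, ih]; push_cast; ring

theorem crossNumber_replicate {G : Type*} [AddCommGroup G] [Fintype G] (q : G) :
    crossNumber (Multiset.replicate (addOrderOf q) q) = 1 := by
  have : (addOrderOf q : ℚ) ≠ 0 := by exact_mod_cast (addOrderOf_pos q).ne'
  simp [crossNumber, this]

/-- A sum of sequences of cross number one has cross number equal to its number of summands. -/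
theorem crossNumber_sum_one {G : Type*} [AddCommGroup G] (l : Multiset (Multiset G))
    (h : ∀ A ∈ l, crossNumber A = 1) : crossNumber l.sum = Multiset.card l := by
  induction l using Multiset.induction_on with
  | empty => simp [crossNumber]
  | cons a s ih =>
    rw [Multiset.sum_cons, crossNumber_add, h a (Multiset.mem_cons_self a s),
      ih (fun A hA => h A (Multiset.mem_cons_of_mem hA)), Multiset.card_cons]
    push_cast; ring

theorem zeroSum_add {G : Type*} [AddCommGroup G] {G₀ : Set G} {A B : Multiset G}
    (hA : IsZeroSumSeq G₀ A) (hB : IsZeroSumSeq G₀ B) : IsZeroSumSeq G₀ (A + B) := by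
  refine ⟨fun x hx => ?_, by simp [hA.2, hB.2]⟩
  rcases Multiset.mem_add.1 hx with h | h
  · exact hA.1 x h
  · exact hB.1 x h

theorem zeroSum_sum {G : Type*} [AddCommGroup G] {G₀ : Set G} (l : Multiset (Multiset G))
    (h : ∀ A ∈ l, IsZeroSumSeq G₀ A) : IsZeroSumSeq G₀ l.sum := by
  induction l using Multiset.induction_on with
  | empty => exact ⟨by simp, by simp⟩
  | cons a s ih =>
    rw [Multiset.sum_cons]
    exact zeroSum_add (h a (Multiset.mem_cons_self a s))
      (ih (fun A hA => h A (Multiset.mem_cons_of_mem hA)))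

theorem zeroSum_left {G : Type*} [AddCommGroup G] {G₀ : Set G} {A B : Multiset G}
    (h : IsZeroSumSeq G₀ (A + B)) (hB : B.sum = 0) : IsZeroSumSeq G₀ A := by
  refine ⟨fun x hx => h.1 x (Multiset.mem_add.2 (Or.inl hx)), ?_⟩
  have := h.2
  simpa [hB] using this

/-- Atoms do not depend on the ambient set. -/
theorem atom_mono {G : Type*} [AddCommGroup G] {G₀ G₁ : Set G} {A : Multiset G}
    (h : IsAtomSeq G₁ A) (hA : ∀ x ∈ A, x ∈ G₀) : IsAtomSeq G₀ A := by
  refine ⟨⟨hA, h.1.2⟩, h.2.1, fun B C hB hC hB0 hC0 he => ?_⟩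
  subst he
  exact h.2.2 B C ⟨fun x hx => h.1.1 x (Multiset.mem_add.2 (Or.inl hx)), hB.2⟩
    ⟨fun x hx => h.1.1 x (Multiset.mem_add.2 (Or.inr hx)), hC.2⟩ hB0 hC0 rfl

theorem exists_factorization {G : Type*} [AddCommGroup G] {G₀ : Set G} :
    ∀ (n : ℕ) (S : Multiset G), Multiset.card S = n → IsZeroSumSeq G₀ S →
      ∃ l : Multiset (Multiset G), (∀ A ∈ l, IsAtomSeq G₀ A) ∧ l.sum = S := by
  intro n
  induction n using Nat.strong_induction_on with
  | _ n ih =>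
    intro S hn hS
    by_cases h0 : S = 0
    · exact ⟨0, by simp, by simp [h0]⟩
    by_cases hat : IsAtomSeq G₀ S
    · exact ⟨{S}, by simpa using hat, by simp⟩
    have : ∃ A B : Multiset G, IsZeroSumSeq G₀ A ∧ IsZeroSumSeq G₀ B ∧ A ≠ 0 ∧ B ≠ 0 ∧
        S = A + B := by
      by_contra hc
      refine hat ⟨hS, h0, fun A B hA hB hA0 hB0 he => hc ⟨A, B, hA, hB, hA0, hB0, he⟩⟩
    obtain ⟨A, B, hA, hB, hA0, hB0, rfl⟩ := this
    have ha := Multiset.card_pos.2 hA0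
    have hb := Multiset.card_pos.2 hB0
    rw [Multiset.card_add] at hn
    obtain ⟨l₁, h₁, rfl⟩ := ih _ (by omega) A rfl hA
    obtain ⟨l₂, h₂, rfl⟩ := ih _ (by omega) B rfl hB
    refine ⟨l₁ + l₂, fun C hC => ?_, by simp⟩
    rcases Multiset.mem_add.1 hC with h | h
    · exact h₁ C h
    · exact h₂ C h

theorem atom_replicate {G : Type*} [AddCommGroup G] [Fintype G] {G₀ : Set G} {q : G}
    (hq : q ∈ G₀) : IsAtomSeq G₀ (Multiset.replicate (addOrderOf q) q) := by
  have hpos := addOrderOf_pos q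
  refine ⟨⟨fun x hx => ?_, ?_⟩, ?_, ?_⟩
  · rw [Multiset.eq_of_mem_replicate hx]; exact hq
  · simp [addOrderOf_nsmul_eq_zero]
  · intro h
    have := congrArg Multiset.card h
    rw [Multiset.card_replicate, Multiset.card_zero] at this
    omega
  · intro A B hA hB hA0 hB0 he
    have hAle : A ≤ Multiset.replicate (addOrderOf q) q := by
      rw [he]; exact Multiset.le_add_right _ _
    obtain ⟨a, ha, rfl⟩ := Multiset.le_replicate_iff.1 hAle
    have hs := hA.2
    rw [Multiset.sum_replicate] at hs
    have hd := addOrderOf_dvd_of_nsmul_eq_zero hs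
    have hcard := congrArg Multiset.card he
    simp at hcard
    have hb := Multiset.card_pos.2 hB0
    have ha' := Multiset.card_pos.2 hA0
    simp at ha'
    have := Nat.le_of_dvd ha' hd
    omega

/-- Two different lengths force a distance of at most their difference. -/
theorem exists_delta {L : Set ℕ} {x y : ℕ} (hx : x ∈ L) (hy : y ∈ L) (hxy : x < y) :
    ∃ d ∈ DeltaOf L, d ≤ y - x := by
  classical
  have hex : ∃ z, z ∈ L ∧ x < z := ⟨y, hy, hxy⟩
  have hs := Nat.find_spec hex
  refine ⟨Nat.find hex - x, ⟨x, hx, Nat.find hex, hs.1, hs.2, rfl, fun z hz h => ?_⟩, ?_⟩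
  · exact Nat.find_min hex h.2 ⟨hz, h.1⟩
  · have := Nat.find_min' hex ⟨hy, hxy⟩
    omega

/-- The `n`-fold multiple of a sequence, `n` the exponent, is a product of elementary atoms. -/
theorem exp_factorization {G : Type*} [AddCommGroup G] [Fintype G] {G₁ : Set G}
    (S : Multiset G) (hS : ∀ x ∈ S, x ∈ G₁) :
    ∃ l : Multiset (Multiset G), (∀ A ∈ l, IsAtomSeq G₁ A) ∧ (∀ A ∈ l, crossNumber A = 1) ∧
      l.sum = AddMonoid.exponent G • S := by
  induction S using Multiset.induction_on with
  | empty => exact ⟨0, by simp, by simp, by simp⟩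
  | cons a s ih =>
    obtain ⟨l, h1, h2, h3⟩ := ih (fun x hx => hS x (Multiset.mem_cons_of_mem hx))
    obtain ⟨m, hm⟩ := AddMonoid.addOrder_dvd_exponent a
    refine ⟨Multiset.replicate m (Multiset.replicate (addOrderOf a) a) + l, ?_, ?_, ?_⟩
    · intro A hA
      rcases Multiset.mem_add.1 hA with h | h
      · rw [Multiset.eq_of_mem_replicate h]
        exact atom_replicate (hS a (Multiset.mem_cons_self a s))
      · exact h1 A h
    · intro A hA
      rcases Multiset.mem_add.1 hA with h | h
      · rw [Multiset.eq_of_mem_replicate h]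
        exact crossNumber_replicate a
      · exact h2 A h
    · rw [Multiset.sum_add, h3, Multiset.sum_replicate, ← Multiset.singleton_add, nsmul_add,
        Multiset.nsmul_singleton, hm, Multiset.nsmul_replicate, mul_comm m]

/-- Atoms over half-factorial sets have cross number one. -/
theorem crossNumber_of_hf {G : Type*} [AddCommGroup G] [Fintype G] {G₁ : Set G}
    (h : DeltaSet G₁ = ∅) {U : Multiset G} (hU : IsAtomSeq G₁ U) : crossNumber U = 1 := by
  by_contra hne
  obtain ⟨l, h1, h2, h3⟩ := exp_factorization U hU.1.1
  have hk := crossNumber_sum_one l h2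
  rw [h3, crossNumber_nsmul] at hk
  set n := AddMonoid.exponent G with hn
  have hn0 : n ≠ 0 := AddMonoid.exponent_ne_zero_of_finite
  have hnU : IsZeroSumSeq G₁ (n • U) := by
    rw [← h3]; exact zeroSum_sum l (fun A hA => (h1 A hA).1)
  have hnU0 : n • U ≠ 0 := by
    intro h0
    have := congrArg Multiset.card h0
    rw [Multiset.card_nsmul] at this
    have hp := Multiset.card_pos.2 hU.2.1
    simp at this
    rcases this with h | h
    · exact hn0 h
    · exact hU.2.1 h
  have hL1 : n ∈ LengthSet G₁ (n • U) :=
    ⟨Multiset.replicate n U, by simp, fun A hA => by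
      rw [Multiset.eq_of_mem_replicate hA]; exact hU, by simp⟩
  have hL2 : Multiset.card l ∈ LengthSet G₁ (n • U) := ⟨l, rfl, h1, h3⟩
  have hne' : n ≠ Multiset.card l := by
    intro he
    rw [← he] at hk
    have hq : (n : ℚ) ≠ 0 := by exact_mod_cast hn0
    apply hne
    field_simp at hk
    exact hk
  have : ∃ d, d ∈ DeltaOf (LengthSet G₁ (n • U)) := by
    rcases lt_or_gt_of_ne hne' with hlt | hlt
    · obtain ⟨d, hd, -⟩ := exists_delta hL1 hL2 hlt
      exact ⟨d, hd⟩
    · obtain ⟨d, hd, -⟩ := exists_delta hL2 hL1 hlt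
      exact ⟨d, hd⟩
  obtain ⟨d, hd⟩ := this
  have : d ∈ DeltaSet G₁ := ⟨_, hnU, hnU0, hd⟩
  rw [h] at this
  exact this

/-- `B` is a product of atoms of cross number one. -/
def OneFac {G : Type*} [AddCommGroup G] (G₀ : Set G) (B : Multiset G) : Prop :=
  ∃ l : Multiset (Multiset G), (∀ A ∈ l, IsAtomSeq G₀ A) ∧ (∀ A ∈ l, crossNumber A = 1) ∧
    l.sum = B

theorem OneFac.add {G : Type*} [AddCommGroup G] {G₀ : Set G} {A B : Multiset G}
    (hA : OneFac G₀ A) (hB : OneFac G₀ B) : OneFac G₀ (A + B) := by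
  obtain ⟨l, h1, h2, rfl⟩ := hA
  obtain ⟨m, h3, h4, rfl⟩ := hB
  refine ⟨l + m, fun C hC => ?_, fun C hC => ?_, by simp⟩
  · rcases Multiset.mem_add.1 hC with h | h
    · exact h1 C h
    · exact h3 C h
  · rcases Multiset.mem_add.1 hC with h | h
    · exact h2 C h
    · exact h4 C h

theorem OneFac.nsmul {G : Type*} [AddCommGroup G] {G₀ : Set G} {A : Multiset G}
    (hA : OneFac G₀ A) (m : ℕ) : OneFac G₀ (m • A) := by
  induction m with
  | zero => exact ⟨0, by simp, by simp, by simp⟩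
  | succ k ih => rw [succ_nsmul]; exact ih.add hA

theorem OneFac.zeroSum {G : Type*} [AddCommGroup G] {G₀ : Set G} {A : Multiset G}
    (hA : OneFac G₀ A) : IsZeroSumSeq G₀ A := by
  obtain ⟨l, h1, -, rfl⟩ := hA
  exact zeroSum_sum l (fun B hB => (h1 B hB).1)

/-- A subproduct of minimal length whose sum contains `o` copies of `q`. -/
theorem exists_min_sub {G : Type*} [DecidableEq G] (q : G) (o : ℕ)
    (l : Multiset (Multiset G)) (h : o ≤ l.sum.count q) :
    ∃ l' m : Multiset (Multiset G), l = l' + m ∧ o ≤ l'.sum.count q ∧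
      ∀ W ∈ l', l'.sum.count q < o + W.count q := by
  classical
  induction l using Multiset.strongInductionOn with
  | _ l ih =>
    by_cases hc : ∀ W ∈ l, l.sum.count q < o + W.count q
    · exact ⟨l, 0, by simp, h, hc⟩
    push Not at hc
    obtain ⟨W, hW, hle⟩ := hc
    obtain ⟨t, rfl⟩ := Multiset.exists_cons_of_mem hW
    rw [Multiset.sum_cons, Multiset.count_add] at hle
    obtain ⟨l', m, h1, h2, h3⟩ := ih t (Multiset.lt_cons_self t W) (by omega)
    exact ⟨l', W ::ₘ m, by rw [h1]; simp, h2, h3⟩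

theorem count_sum_ge {G : Type*} [DecidableEq G] (q : G) (c : ℕ)
    (l : Multiset (Multiset G)) (h : ∀ W ∈ l, c ≤ W.count q) :
    Multiset.card l * c ≤ l.sum.count q := by
  induction l using Multiset.induction_on with
  | empty => simp
  | cons a s ih =>
    have h1 := h a (Multiset.mem_cons_self a s)
    have h2 := ih (fun W hW => h W (Multiset.mem_cons_of_mem hW))
    rw [Multiset.card_cons, Multiset.sum_cons, Multiset.count_add]
    linarith [add_mul (Multiset.card s) 1 c]

/-- Core step: elementary atoms cannot turn a sequence into a product of atoms of
cross number one unless the exponent is large. -/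
theorem core {G : Type*} [AddCommGroup G] [Fintype G] {G₀ : Set G} {d : ℕ}
    (hd : ∀ A, IsAtomSeq G₀ A → crossNumber A ≠ 1 →
      ((d : ℚ) + 1 ≤ crossNumber A ∧ ∀ q ∈ G₀, q ∈ A))
    (hn : AddMonoid.exponent G < 2 * d + 3) {Y : Multiset G} {q : G} (hq : q ∈ G₀)
    (hF : OneFac G₀ (Y + Multiset.replicate (addOrderOf q) q)) : OneFac G₀ Y := by
  classical
  by_contra hY
  obtain ⟨l, h1, h2, h3⟩ := hF
  set o := addOrderOf q with ho
  obtain ⟨l', m, rfl, hle, hmin⟩ := exists_min_sub q o l (by rw [h3]; simp)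
  have hle' : Multiset.replicate o q ≤ l'.sum := Multiset.le_count_iff_replicate_le.1 hle
  obtain ⟨Z, hZ⟩ := Multiset.le_iff_exists_add.1 hle'
  have hl1 : ∀ A ∈ l', IsAtomSeq G₀ A := fun A hA => h1 A (Multiset.mem_add.2 (Or.inl hA))
  have hl2 : ∀ A ∈ l', crossNumber A = 1 := fun A hA => h2 A (Multiset.mem_add.2 (Or.inl hA))
  have hZ0 : ¬ OneFac G₀ Z := by
    intro hF
    apply hY
    have hm : OneFac G₀ m.sum := ⟨m, fun A hA => h1 A (Multiset.mem_add.2 (Or.inr hA)),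
      fun A hA => h2 A (Multiset.mem_add.2 (Or.inr hA)), rfl⟩
    have : Y = Z + m.sum := by
      rw [Multiset.sum_add, hZ, add_comm Y, add_assoc] at h3
      exact (add_left_cancel h3).symm
    rw [this]; exact hF.add hm
  have hZs : IsZeroSumSeq G₀ Z := by
    have h := zeroSum_sum l' (fun A hA => (hl1 A hA).1)
    rw [hZ, add_comm] at h
    exact zeroSum_left h (atom_replicate hq).1.2
  obtain ⟨f, hf, hfs⟩ := exists_factorization _ Z rfl hZs
  have : ∃ A ∈ f, crossNumber A ≠ 1 := by
    by_contra hc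
    push Not at hc
    exact hZ0 ⟨f, hf, hc, hfs⟩
  obtain ⟨A, hA, hA1⟩ := this
  obtain ⟨hk, hsupp⟩ := hd A (hf A hA) hA1
  obtain ⟨f', rfl⟩ := Multiset.exists_cons_of_mem hA
  rw [Multiset.sum_cons] at hfs
  have hkZ : (d : ℚ) + 1 ≤ crossNumber Z := by
    rw [← hfs, crossNumber_add]
    linarith [crossNumber_nonneg f'.sum]
  have hqZ : 1 ≤ Z.count q := by
    rw [Multiset.one_le_count_iff_mem, ← hfs]
    exact Multiset.mem_add.2 (Or.inl (hsupp q hq))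
  have hr := crossNumber_sum_one l' hl2
  rw [hZ, crossNumber_add, crossNumber_replicate] at hr
  have hr' : d + 2 ≤ Multiset.card l' := by
    have : (d : ℚ) + 2 ≤ Multiset.card l' := by linarith
    exact_mod_cast this
  have hcount : l'.sum.count q = o + Z.count q := by rw [hZ]; simp
  have hge := count_sum_ge q (Z.count q + 1) l' (fun W hW => by
    have := hmin W hW
    omega)
  rw [hcount] at hge
  have hon : o ≤ AddMonoid.exponent G :=
    Nat.le_of_dvd (Nat.pos_of_ne_zero AddMonoid.exponent_ne_zero_of_finite)
      (AddMonoid.addOrder_dvd_exponent q)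
  nlinarith

theorem core_nsmul {G : Type*} [AddCommGroup G] [Fintype G] {G₀ : Set G} {d : ℕ}
    (hd : ∀ A, IsAtomSeq G₀ A → crossNumber A ≠ 1 →
      ((d : ℚ) + 1 ≤ crossNumber A ∧ ∀ q ∈ G₀, q ∈ A))
    (hn : AddMonoid.exponent G < 2 * d + 3) {Y : Multiset G} (S : Multiset G)
    (hS : ∀ x ∈ S, x ∈ G₀)
    (hF : OneFac G₀ (Y + AddMonoid.exponent G • S)) : OneFac G₀ Y := by
  induction S using Multiset.induction_on with
  | empty => simpa using hF
  | cons a s ih =>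
    apply ih (fun x hx => hS x (Multiset.mem_cons_of_mem hx))
    obtain ⟨m, hm⟩ := AddMonoid.addOrder_dvd_exponent a
    have he : Y + AddMonoid.exponent G • (a ::ₘ s) = (Y + AddMonoid.exponent G • s) +
        m • Multiset.replicate (addOrderOf a) a := by
      rw [← Multiset.singleton_add, nsmul_add, Multiset.nsmul_singleton,
        Multiset.nsmul_replicate, mul_comm m, ← hm]
      abel
    rw [he] at hF
    generalize Y + AddMonoid.exponent G • s = X at hF
    clear he hm
    induction m with
    | zero => simpa using hF
    | succ k ihk =>
      rw [succ_nsmul, ← add_assoc] at hF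
      exact ihk (core hd hn (hS a (Multiset.mem_cons_self a s)) hF)

/-- An element of the group generated by `G₂` occurs exactly once in some atom. -/
theorem exists_atom_once {G : Type*} [AddCommGroup G] [Fintype G] {G₂ : Set G} {g : G}
    (hg : g ∉ G₂) (hcl : g ∈ AddSubgroup.closure G₂) :
    ∃ S : Multiset G, (∀ x ∈ S, x ∈ G₂) ∧ IsAtomSeq (insert g G₂) (g ::ₘ S) := by
  classical
  have hneg : -g ∈ AddSubmonoid.closure G₂ := by
    rw [← AddSubgroup.closure_toAddSubmonoid_of_finite]
    exact (AddSubgroup.closure G₂).neg_mem hcl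
  obtain ⟨T, hT, hTs⟩ := AddSubmonoid.exists_multiset_of_mem_closure hneg
  have hz : IsZeroSumSeq (insert g G₂) (g ::ₘ T) := by
    refine ⟨fun x hx => ?_, by simp [hTs]⟩
    rcases Multiset.mem_cons.1 hx with h | h
    · exact Or.inl h
    · exact Or.inr (hT x h)
  obtain ⟨f, hf, hfs⟩ := exists_factorization _ _ rfl hz
  have hgf : g ∈ f.sum := by rw [hfs]; simp
  obtain ⟨A, hA, hgA⟩ := Multiset.mem_join.1 (show g ∈ f.join from hgf)
  obtain ⟨f', rfl⟩ := Multiset.exists_cons_of_mem hA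
  obtain ⟨S, rfl⟩ := Multiset.exists_cons_of_mem hgA
  refine ⟨S, fun x hx => ?_, hf _ hA⟩
  rw [Multiset.sum_cons, Multiset.cons_add] at hfs
  have := (Multiset.cons_inj_right g).1 hfs
  apply hT
  rw [← this]
  exact Multiset.mem_add.2 (Or.inl hx)

/-- Multiplying an atom by enough copies of `V = g S` gives a product of atoms of
cross number one. -/
theorem mul_up {G : Type*} [AddCommGroup G] [Fintype G] {G₀ : Set G} {g : G} (hg : g ∈ G₀)
    (hp : ∀ A, IsAtomSeq (G₀ \ {g}) A → crossNumber A = 1) {S : Multiset G}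
    (hS : ∀ x ∈ S, x ∈ G₀ \ {g}) (hV : (g ::ₘ S).sum = 0) {U : Multiset G}
    (hU : IsAtomSeq G₀ U) (hU1 : crossNumber U ≠ 1) :
    ∃ m ≤ addOrderOf g, OneFac G₀ (U + m • (g ::ₘ S)) := by
  classical
  have hao : U.count g < addOrderOf g := by
    by_contra hc
    push Not at hc
    obtain ⟨B, hB⟩ := Multiset.le_iff_exists_add.1 (Multiset.le_count_iff_replicate_le.1 hc)
    have hr := atom_replicate hg
    by_cases hB0 : B = 0
    · apply hU1
      rw [hB, hB0, add_zero, crossNumber_replicate]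
    · refine hU.2.2 _ B hr.1 ?_ hr.2.1 hB0 hB
      have h := hU.1
      rw [hB, add_comm] at h
      exact zeroSum_left h hr.1.2
  refine ⟨addOrderOf g - U.count g, Nat.sub_le _ _, ?_⟩
  set m := addOrderOf g - U.count g with hm
  set U' := U.filter (fun x => ¬ x = g) with hU'
  have hsplit : U = Multiset.replicate (U.count g) g + U' := by
    conv_lhs => rw [← Multiset.filter_add_not (fun x => x = g) U]
    congr 1
    convert Multiset.filter_eq' U g
  have he : U + m • (g ::ₘ S) = Multiset.replicate (addOrderOf g) g + (U' + m • S) := by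
    have h1 : Multiset.replicate (addOrderOf g) g
        = Multiset.replicate (U.count g) g + Multiset.replicate m g := by
      rw [← Multiset.replicate_add]; congr 1; omega
    rw [h1, ← Multiset.singleton_add, nsmul_add, Multiset.nsmul_singleton]
    conv_lhs => rw [hsplit]
    abel
  have hR : IsZeroSumSeq (G₀ \ {g}) (U' + m • S) := by
    constructor
    · intro x hx
      rcases Multiset.mem_add.1 hx with h | h
      · rw [hU', Multiset.mem_filter] at h
        exact ⟨hU.1.1 x h.1, h.2⟩
      · exact hS x (Multiset.mem_of_mem_nsmul h)
    · have := congrArg Multiset.sum he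
      rw [Multiset.sum_add, Multiset.sum_nsmul, hV, hU.1.2, Multiset.sum_add,
        (atom_replicate hg).1.2] at this
      simpa using this.symm
  obtain ⟨f, hf, hfs⟩ := exists_factorization _ _ rfl hR
  rw [he]
  refine OneFac.add ⟨{Multiset.replicate (addOrderOf g) g}, ?_, ?_, by simp⟩
    ⟨f, fun A hA => atom_mono (hf A hA) (fun x hx => ((hf A hA).1.1 x hx).1),
      fun A hA => hp A (hf A hA), hfs⟩
  · simpa using atom_replicate hg
  · simpa using crossNumber_replicate g

/-- If `G₀` is a minimal non-half-factorial LCN-set and some `G₂ ⊆ G₀`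
satisfies `⟨G₂⟩ = ⟨G₀⟩` and `|G₂| ≤ |G₀| − 2`, then
`min Δ(G₀) ≤ max {1, exp(G) − 4}`. -/
theorem stmt_9 {G : Type*} [AddCommGroup G] [Fintype G] (G₀ G₂ : Set G)
    (hmin : IsMinNonHalfFactorial G₀) (hLCN : IsLCNSet G₀)
    (hsub : G₂ ⊆ G₀)
    (hgen : AddSubgroup.closure G₂ = AddSubgroup.closure G₀)
    (hcard : G₂.ncard + 2 ≤ G₀.ncard) :
    sInf (DeltaSet G₀) ≤ max 1 (AddMonoid.exponent G - 4) := by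
  classical
  set d := sInf (DeltaSet G₀) with hd
  by_contra hcon
  have hn : AddMonoid.exponent G < 2 * d + 3 := by
    rw [not_le, max_lt_iff] at hcon
    omega
  -- a generator outside `G₂`
  have hfin : G₂.Finite := Set.toFinite _
  obtain ⟨g, hg, hg2⟩ : ∃ g ∈ G₀, g ∉ G₂ := by
    by_contra hc
    push Not at hc
    have := Set.ncard_le_ncard hc hfin
    omega
  have hcl : g ∈ AddSubgroup.closure G₂ := by
    rw [hgen]; exact AddSubgroup.subset_closure hg
  obtain ⟨S, hS, hV⟩ := exists_atom_once hg2 hcl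
  have hins : insert g G₂ ⊂ G₀ := by
    refine ⟨Set.insert_subset hg hsub, fun hle => ?_⟩
    have h1 := Set.ncard_le_ncard hle (Set.toFinite _)
    have h2 := Set.ncard_insert_le g G₂
    omega
  have hV1 : crossNumber (g ::ₘ S) = 1 := crossNumber_of_hf (hmin.2 _ hins) hV
  have hV0 : IsAtomSeq G₀ (g ::ₘ S) := atom_mono hV (fun x hx => hins.1 (hV.1.1 x hx))
  have hVF : OneFac G₀ (g ::ₘ S) := ⟨{g ::ₘ S}, by simpa using hV0, by simpa using hV1, by simp⟩
  have hproper : ∀ q ∈ G₀, G₀ \ {q} ⊂ G₀ := fun q hq =>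
    ⟨Set.sdiff_subset, fun hle => (hle hq).2 rfl⟩
  have hSg : ∀ x ∈ S, x ∈ G₀ \ {g} := fun x hx =>
    ⟨hsub (hS x hx), fun h => hg2 (by rw [← (h : x = g)]; exact hS x hx)⟩
  have hup : ∀ U, IsAtomSeq G₀ U → crossNumber U ≠ 1 →
      ∃ m ≤ addOrderOf g, OneFac G₀ (U + m • (g ::ₘ S)) := fun U hU hU1 =>
    mul_up hg (fun A hA => crossNumber_of_hf (hmin.2 _ (hproper g hg)) hA) hSg hV.1.2 hU hU1
  -- atoms of cross number different from one
  have hbig : ∀ A, IsAtomSeq G₀ A → crossNumber A ≠ 1 →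
      ((d : ℚ) + 1 ≤ crossNumber A ∧ ∀ q ∈ G₀, q ∈ A) := by
    intro A hA hA1
    constructor
    · obtain ⟨m, -, hF⟩ := hup A hA hA1
      have hz := hF.zeroSum
      obtain ⟨l, h1, h2, h3⟩ := hF
      have hk := crossNumber_sum_one l h2
      rw [h3, crossNumber_add, crossNumber_nsmul, hV1] at hk
      have hlt : 1 < crossNumber A := lt_of_le_of_ne (hLCN A hA) (Ne.symm hA1)
      have hlt' : m + 1 < Multiset.card l := by
        have : (m : ℚ) + 1 < Multiset.card l := by linarith
        exact_mod_cast this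
      have hL1 : m + 1 ∈ LengthSet G₀ (A + m • (g ::ₘ S)) := by
        refine ⟨A ::ₘ Multiset.replicate m (g ::ₘ S), by simp, fun B hB => ?_, by simp⟩
        rcases Multiset.mem_cons.1 hB with h | h
        · rw [h]; exact hA
        · rw [Multiset.eq_of_mem_replicate h]; exact hV0
      have hL2 : Multiset.card l ∈ LengthSet G₀ (A + m • (g ::ₘ S)) := ⟨l, rfl, h1, h3⟩
      obtain ⟨e, he, hle⟩ := exists_delta hL1 hL2 hlt'
      have hde : d ≤ e := Nat.sInf_le ⟨_, hz, fun h0 => hA.2.1 (by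
        have := Multiset.le_add_right A (m • (g ::ₘ S))
        rw [h0] at this
        exact Multiset.le_zero.1 this), he⟩
      have : d + (m + 1) ≤ Multiset.card l := by omega
      have : (d : ℚ) + (m + 1) ≤ Multiset.card l := by exact_mod_cast this
      linarith
    · intro q hq
      by_contra hqA
      apply hA1
      refine crossNumber_of_hf (hmin.2 _ (hproper q hq)) (atom_mono hA fun x hx => ?_)
      exact ⟨hA.1.1 x hx, fun h => hqA (by rw [← (h : x = q)]; exact hx)⟩
  -- there is an atom of cross number different from one
  obtain ⟨U, hU, hU1⟩ : ∃ U, IsAtomSeq G₀ U ∧ crossNumber U ≠ 1 := by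
    by_contra hc
    push Not at hc
    obtain ⟨e, B, -, -, x, ⟨l, rfl, hl1, hl2⟩, y, ⟨l', rfl, hl1', hl2'⟩, hlt, -, -⟩ := hmin.1
    have e1 := crossNumber_sum_one l (fun A hA => hc A (hl1 A hA))
    have e2 := crossNumber_sum_one l' (fun A hA => hc A (hl1' A hA))
    rw [hl2] at e1
    rw [hl2', e1] at e2
    have : Multiset.card l = Multiset.card l' := by exact_mod_cast e2
    omega
  obtain ⟨m, -, hF⟩ := hup U hU hU1
  have hm : m ≤ AddMonoid.exponent G * m :=
    Nat.le_mul_of_pos_left m (Nat.pos_of_ne_zero AddMonoid.exponent_ne_zero_of_finite)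
  have hF2 := hF.add (hVF.nsmul (AddMonoid.exponent G * m - m))
  rw [add_assoc, ← add_nsmul, Nat.add_sub_cancel' hm, mul_nsmul'] at hF2
  have hUF : OneFac G₀ U := core_nsmul hbig hn (m • (g ::ₘ S))
    (fun x hx => hV0.1.1 x (Multiset.mem_of_mem_nsmul hx)) hF2
  obtain ⟨l, h1, h2, h3⟩ := hUF
  have hl0 : l ≠ 0 := by
    rintro rfl
    exact hU.2.1 (by simpa using h3.symm)
  obtain ⟨A, hA⟩ := Multiset.exists_mem_of_ne_zero hl0
  obtain ⟨l', rfl⟩ := Multiset.exists_cons_of_mem hA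
  rw [Multiset.sum_cons] at h3
  by_cases hl' : l'.sum = 0
  · rw [hl', add_zero] at h3
    exact hU1 (h3 ▸ h2 A hA)
  · exact hU.2.2 A l'.sum (h1 A hA).1
      (zeroSum_sum l' (fun B hB => (h1 B (Multiset.mem_cons_of_mem hB)).1)) (h1 A hA).2.1 hl' h3.symm
end
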